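/- arXiv:0712.4259 — 6 statements merged into one kernel-verified Lean document; each statement's English description precedes it below -/
import Mathlib

section
/- Let G be a finite group, f : G → ℂ, and let ρ₁, ρ₂ be unitary matrix representations of G. Define the (Clebsch-Gordan-free) bispectrum component B_f(ρ₁, ρ₂) = (f̂(ρ₁) ⊗ f̂(ρ₂))ᴴ · (Σ_{x∈G} f(x) (ρ₁(x) ⊗ ρ₂(x))). Then B is invariant to left translation: for every t ∈ G, B_{f^t}(ρ₁, ρ₂) = B_f(ρ₁, ρ₂), where f^t(x) = f(t⁻¹x). -/
/-!
Substituting `x ↦ t * x` shows that translating `f` by `t` multiplies `∑ x, f x • σ x` on the left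
by `σ t` for every multiplicative `σ` (`sum_translate_smul`). By the mixed-product property of `⊗ₖ`
this applies to `ρ₁ ⊗ₖ ρ₂` as well as to `ρ₁` and `ρ₂`, so both factors of the bispectrum pick up
the same matrix `U = ρ₁ t ⊗ₖ ρ₂ t` on the left. It enters the product as `Uᴴ * U`, which is `1`
because a Kronecker product of unitary matrices is unitary.
-/

open Matrix BigOperators Kronecker

/-- The Fourier transform of `f : G → ℂ` at a matrix representation `ρ`:
`f̂(ρ) = Σ_{x∈G} f(x) ρ(x)`. -/
noncomputable def ftrans {G : Type*} [Group G] [Fintype G] {d : ℕ}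
    (f : G → ℂ) (ρ : G →* Matrix (Fin d) (Fin d) ℂ) : Matrix (Fin d) (Fin d) ℂ :=
  ∑ x : G, f x • ρ x

theorem sum_translate_smul {G : Type*} [Group G] [Fintype G] {n : Type*} [Fintype n]
    (f : G → ℂ) (t : G) (σ : G → Matrix n n ℂ) (hσ : ∀ x y, σ (x * y) = σ x * σ y) :
    ∑ x : G, f (t⁻¹ * x) • σ x = σ t * ∑ x : G, f x • σ x := by
  rw [← Equiv.sum_comp (Equiv.mulLeft t), Finset.mul_sum]
  simp [hσ]

/-- the (Clebsch-Gordan-free) bispectrum component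
`B_f(ρ₁,ρ₂) = (f̂(ρ₁) ⊗ f̂(ρ₂))ᴴ * (Σ_x f(x) (ρ₁(x) ⊗ ρ₂(x)))` is invariant to
left translation `f^t(x) = f(t⁻¹x)`, for unitary `ρ₁, ρ₂`. -/
theorem bispectrum_left_invariant {G : Type*} [Group G] [Fintype G]
    (f : G → ℂ) (t : G) {d₁ d₂ : ℕ}
    (ρ₁ : G →* Matrix (Fin d₁) (Fin d₁) ℂ) (ρ₂ : G →* Matrix (Fin d₂) (Fin d₂) ℂ)
    (hρ₁ : ∀ x : G, (ρ₁ x)ᴴ * ρ₁ x = 1) (hρ₂ : ∀ x : G, (ρ₂ x)ᴴ * ρ₂ x = 1) :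
    (ftrans (fun x => f (t⁻¹ * x)) ρ₁ ⊗ₖ ftrans (fun x => f (t⁻¹ * x)) ρ₂)ᴴ *
        (∑ x : G, f (t⁻¹ * x) • (ρ₁ x ⊗ₖ ρ₂ x)) =
      (ftrans f ρ₁ ⊗ₖ ftrans f ρ₂)ᴴ * (∑ x : G, f x • (ρ₁ x ⊗ₖ ρ₂ x)) := by
  have h₁ : ftrans (fun x => f (t⁻¹ * x)) ρ₁ = ρ₁ t * ftrans f ρ₁ :=
    sum_translate_smul f t ρ₁ (map_mul ρ₁)
  have h₂ : ftrans (fun x => f (t⁻¹ * x)) ρ₂ = ρ₂ t * ftrans f ρ₂ :=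
    sum_translate_smul f t ρ₂ (map_mul ρ₂)
  have h₃ := sum_translate_smul f t (fun x => ρ₁ x ⊗ₖ ρ₂ x)
    (fun x y => by simp only [map_mul, mul_kronecker_mul])
  have hU : (ρ₁ t ⊗ₖ ρ₂ t)ᴴ * (ρ₁ t ⊗ₖ ρ₂ t) = 1 := by
    rw [conjTranspose_kronecker, ← mul_kronecker_mul, hρ₁, hρ₂, one_kronecker_one]
  rw [h₁, h₂, h₃, mul_kronecker_mul, conjTranspose_mul, Matrix.mul_assoc,
    ← Matrix.mul_assoc (ρ₁ t ⊗ₖ ρ₂ t)ᴴ, hU, Matrix.one_mul]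
end

section
/- Let G be a finite group, f : G → ℂ, and let ρ₁, ρ₂ be unitary matrix representations of G. Let b_f(x₁, x₂) = Σ_{y∈G} (f(yx₁⁻¹))* (f(yx₂⁻¹))* f(y) be the triple correlation of f. Then the Fourier transform of the triple correlation over G × G at the representation ρ₁ ⊗ ρ₂ equals the bispectrum: Σ_{x₁∈G} Σ_{x₂∈G} b_f(x₁, x₂) (ρ₁(x₁) ⊗ ρ₂(x₂)) = (f̂(ρ₁) ⊗ f̂(ρ₂))ᴴ · (Σ_{x∈G} f(x) (ρ₁(x) ⊗ ρ₂(x))). -/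
/-! For fixed `y`, the substitution `z = y x⁻¹` gives `ρ x = ρ(z)⁻¹ ρ(y) = ρ(z)ᴴ ρ(y)` by
unitarity, so `Σ_x (f(y x⁻¹))* ρ(x) = f̂(ρ)ᴴ ρ(y)` (`sum_conj_translate_smul`). In the transform of
the triple correlation, summing over `y` last splits the sums over `x₁` and `x₂` into a Kronecker
product of two such sums, and the mixed-product property pulls out `(f̂(ρ₁) ⊗ f̂(ρ₂))ᴴ`. -/

open Matrix BigOperators Kronecker

/-- The transform of the conjugated, reflected translate `x ↦ (f(y x⁻¹))*` at a unitary
representation. -/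
lemma sum_conj_translate_smul {G : Type*} [Group G] [Fintype G] (f : G → ℂ) {d : ℕ}
    (ρ : G →* Matrix (Fin d) (Fin d) ℂ) (hρ : ∀ x : G, (ρ x)ᴴ * ρ x = 1) (y : G) :
    ∑ x : G, (starRingEnd ℂ) (f (y * x⁻¹)) • ρ x = (ftrans f ρ)ᴴ * ρ y := by
  rw [ftrans, conjTranspose_sum, Finset.sum_mul]
  refine Fintype.sum_equiv ((Equiv.inv G).trans (Equiv.mulLeft y)) _ _ fun x => ?_
  have h : ρ y = ρ (y * x⁻¹) * ρ x := by rw [← map_mul, inv_mul_cancel_right]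
  simp only [Equiv.trans_apply, Equiv.inv_apply, Equiv.coe_mulLeft, conjTranspose_smul,
    smul_mul_assoc, starRingEnd_apply]
  rw [h, ← Matrix.mul_assoc, hρ, Matrix.one_mul]

/-- the Fourier transform of the triple correlation
`b_f(x₁,x₂) = Σ_{y∈G} (f(yx₁⁻¹))* (f(yx₂⁻¹))* f(y)` over `G × G` at `ρ₁ ⊗ ρ₂`
equals the bispectrum `(f̂(ρ₁) ⊗ f̂(ρ₂))ᴴ * (Σ_x f(x) (ρ₁(x) ⊗ ρ₂(x)))`. -/
theorem fourier_triple_correlation_eq_bispectrum {G : Type*} [Group G] [Fintype G]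
    (f : G → ℂ) {d₁ d₂ : ℕ}
    (ρ₁ : G →* Matrix (Fin d₁) (Fin d₁) ℂ) (ρ₂ : G →* Matrix (Fin d₂) (Fin d₂) ℂ)
    (hρ₁ : ∀ x : G, (ρ₁ x)ᴴ * ρ₁ x = 1) (hρ₂ : ∀ x : G, (ρ₂ x)ᴴ * ρ₂ x = 1) :
    (∑ x₁ : G, ∑ x₂ : G,
        (∑ y : G, (starRingEnd ℂ) (f (y * x₁⁻¹)) * (starRingEnd ℂ) (f (y * x₂⁻¹)) * f y) •
          (ρ₁ x₁ ⊗ₖ ρ₂ x₂)) =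
      (ftrans f ρ₁ ⊗ₖ ftrans f ρ₂)ᴴ * (∑ x : G, f x • (ρ₁ x ⊗ₖ ρ₂ x)) := by
  have key : ∀ y : G, (∑ x₁ : G, ∑ x₂ : G,
      ((starRingEnd ℂ) (f (y * x₁⁻¹)) * (starRingEnd ℂ) (f (y * x₂⁻¹)) * f y) •
        (ρ₁ x₁ ⊗ₖ ρ₂ x₂)) =
      f y • ((∑ x₁ : G, (starRingEnd ℂ) (f (y * x₁⁻¹)) • ρ₁ x₁) ⊗ₖ
        (∑ x₂ : G, (starRingEnd ℂ) (f (y * x₂⁻¹)) • ρ₂ x₂)) := by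
    intro y
    ext i j
    simp only [Matrix.sum_apply, Matrix.smul_apply, kroneckerMap_apply, smul_eq_mul]
    rw [Finset.sum_mul_sum, Finset.mul_sum]
    simp only [Finset.mul_sum]
    exact Finset.sum_congr rfl fun _ _ => Finset.sum_congr rfl fun _ _ => by ring
  calc _ = ∑ y : G, ∑ x₁ : G, ∑ x₂ : G,
        ((starRingEnd ℂ) (f (y * x₁⁻¹)) * (starRingEnd ℂ) (f (y * x₂⁻¹)) * f y) •
          (ρ₁ x₁ ⊗ₖ ρ₂ x₂) := by
        simp only [Finset.sum_smul]
        exact (Finset.sum_congr rfl fun _ _ => Finset.sum_comm).trans Finset.sum_comm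
    _ = _ := by
        rw [Finset.mul_sum]
        refine Finset.sum_congr rfl fun y _ => ?_
        rw [key, sum_conj_translate_smul f ρ₁ hρ₁, sum_conj_translate_smul f ρ₂ hρ₂,
          mul_kronecker_mul, conjTranspose_kronecker, Matrix.mul_smul]
end

section
/- Let G be a finite group, f : G → ℂ, z ∈ G, and ρ a unitary matrix representation of G. Define r_z(x) = f(x) f(xz) and the skew spectrum component q̂_z(ρ) = r̂_z(ρ)ᴴ · f̂(ρ). Then the skew spectrum is invariant to left translation: for every t ∈ G, the skew spectrum of f^t equals that of f, i.e., ((r_z^{[f^t]})^(ρ))ᴴ · (f^t)^(ρ) = r̂_z(ρ)ᴴ · f̂(ρ), where f^t(x) = f(t⁻¹x) and r_z^{[f^t]}(x) = f^t(x) f^t(xz). -/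
open Matrix BigOperators Kronecker

/-- Left translation by `t` multiplies the Fourier transform on the left by `ρ t`
(substitute `x ↦ t * x` in the sum). The unitary factor `ρ t` then cancels in any product
`(ftrans g ρ)ᴴ * ftrans f ρ` of transforms of simultaneously translated functions. -/
theorem ftrans_left_translate {G : Type*} [Group G] [Fintype G] {d : ℕ}
    (f : G → ℂ) (t : G) (ρ : G →* Matrix (Fin d) (Fin d) ℂ) :
    ftrans (fun x => f (t⁻¹ * x)) ρ = ρ t * ftrans f ρ := by
  unfold ftrans
  rw [← Equiv.sum_comp (Equiv.mulLeft t), Finset.mul_sum]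
  simp

/-- the skew spectrum component `q̂_z(ρ) = r̂_z(ρ)ᴴ * f̂(ρ)`, where
`r_z(x) = f(x) f(xz)`, is invariant to left translation `f^t(x) = f(t⁻¹x)`,
for unitary `ρ`. -/
theorem skew_spectrum_left_invariant {G : Type*} [Group G] [Fintype G]
    (f : G → ℂ) (z t : G) {d : ℕ} (ρ : G →* Matrix (Fin d) (Fin d) ℂ)
    (hρ : ∀ x : G, (ρ x)ᴴ * ρ x = 1) :
    (ftrans (fun x => f (t⁻¹ * x) * f (t⁻¹ * (x * z))) ρ)ᴴ *
        ftrans (fun x => f (t⁻¹ * x)) ρ =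
      (ftrans (fun x => f x * f (x * z)) ρ)ᴴ * ftrans f ρ := by
  have hr := ftrans_left_translate (fun x => f x * f (x * z)) t ρ
  simp only [mul_assoc] at hr
  rw [hr, ftrans_left_translate, conjTranspose_mul, Matrix.mul_assoc,
    ← Matrix.mul_assoc (ρ t)ᴴ, hρ, Matrix.one_mul]
end

section
/- Let G be a finite group, f : G → ℂ, z ∈ G, and ρ a unitary matrix representation of G. Let r_z(x) = f(x) f(xz), let b_f(x₁, x₂) = Σ_{y∈G} (f(yx₁⁻¹))* (f(yx₂⁻¹))* f(y) be the triple correlation, and let q̂_z(ρ) = r̂_z(ρ)ᴴ · f̂(ρ) be the skew spectrum component. Then the skew spectrum component is the Fourier transform of the left z⁻¹-diagonal slice of the triple correlation: q̂_z(ρ) = Σ_{x∈G} b_f(x, z⁻¹x) ρ(x). -/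
/-!
Unitarity gives `ρ(u)ᴴ = ρ(u⁻¹)` (`conjTranspose_eq_map_inv`), so the skew spectrum component
expands to the double sum of `(f u)* (f (uz))* f(y) ρ(u⁻¹y)` over `u` and `y`. Substituting
`x = u⁻¹y` for each fixed `y` gives `u = yx⁻¹` and `uz = y(z⁻¹x)⁻¹`, which is the summand of
`b_f(x, z⁻¹x) ρ(x)`.
-/

open Matrix BigOperators Kronecker

/-- A unitary representation satisfies `ρ(x)ᴴ = ρ(x⁻¹)`. -/
lemma conjTranspose_eq_map_inv {G : Type*} [Group G] {d : ℕ}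
    (ρ : G →* Matrix (Fin d) (Fin d) ℂ) (hρ : ∀ x : G, (ρ x)ᴴ * ρ x = 1) (x : G) :
    (ρ x)ᴴ = ρ x⁻¹ :=
  left_inv_eq_right_inv (hρ x) (by rw [← map_mul, mul_inv_cancel, map_one])

/-- the skew spectrum component `q̂_z(ρ) = r̂_z(ρ)ᴴ * f̂(ρ)` (with
`r_z(x) = f(x) f(xz)`) is the Fourier transform of the left `z⁻¹`-diagonal slice
of the triple correlation: `q̂_z(ρ) = Σ_x b_f(x, z⁻¹x) ρ(x)`. -/
theorem skew_spectrum_eq_triple_correlation_slice {G : Type*} [Group G] [Fintype G]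
    (f : G → ℂ) (z : G) {d : ℕ} (ρ : G →* Matrix (Fin d) (Fin d) ℂ)
    (hρ : ∀ x : G, (ρ x)ᴴ * ρ x = 1) :
    (ftrans (fun x => f x * f (x * z)) ρ)ᴴ * ftrans f ρ =
      ∑ x : G,
        (∑ y : G, (starRingEnd ℂ) (f (y * x⁻¹)) * (starRingEnd ℂ) (f (y * (z⁻¹ * x)⁻¹)) * f y) •
          ρ x := by
  simp only [ftrans, conjTranspose_sum, conjTranspose_smul, conjTranspose_eq_map_inv ρ hρ,
    Finset.sum_mul, Finset.mul_sum, Finset.sum_smul]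
  rw [Finset.sum_comm (f := fun x y => _ • ρ x)]
  refine Finset.sum_congr rfl fun y _ => ?_
  -- For fixed `y`, the change of variables is `u = y * x⁻¹`, i.e. `x = u⁻¹ * y`.
  refine Fintype.sum_equiv ((Equiv.inv G).trans (Equiv.mulRight y)) _ _ fun u => ?_
  have h₁ : y * (u⁻¹ * y)⁻¹ = u := by group
  have h₂ : y * (z⁻¹ * (u⁻¹ * y))⁻¹ = u * z := by group
  simp only [Equiv.trans_apply, Equiv.inv_apply, Equiv.coe_mulRight, h₁, h₂,
    smul_mul_smul_comm, map_mul, starRingEnd_apply, star_mul']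
end

section
/- Let G be a finite group and f, f' : G → ℂ. Assume that for every unitary matrix representation ρ of G the Fourier matrix f̂(ρ) is invertible. Then f' = f^t for some t ∈ G if and only if for every z ∈ G and every unitary matrix representation ρ of G the skew spectra agree: (r_z^{[f']})^(ρ)ᴴ · f̂'(ρ) = r̂_z(ρ)ᴴ · f̂(ρ), where r_z(x) = f(x) f(xz), r_z^{[f']}(x) = f'(x) f'(xz), and f^t(x) = f(t⁻¹x). (Agreement over all unitary matrix representations is equivalent to agreement over a complete set of inequivalent irreducible unitary representations of G.) -/
/-!
The only representations used are the trivial and the left regular one. At the regular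
representation the Fourier transform of `f` is the matrix `M x g = f (x * g⁻¹)`, and agreement of
the skew spectra says that the triple correlations
`∑ k, conj (f (k * w⁻¹)) * conj (f (k * z⁻¹)) * f (k * g⁻¹)` of `f` and `f'` agree for all
`w, z, g`. In matrix form, `Mᴴ * D w * M = M'ᴴ * D' w * M'` with `D w` the diagonal matrix with
entries `conj (f (x * w⁻¹))`.

Put `S = ∑ x, f x`. Summing the triple correlations at `g = 1` over `w` and `z` shows that
`conj S ^ 2 * S` is the same for `f` and `f'`, so the two sums agree, and `S ≠ 0` by the hypothesis
at the trivial representation. Since `∑ w, D w = conj S • 1`, this gives `Mᴴ * M = M'ᴴ * M'`. As `M`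
is invertible, `U = M' * M⁻¹` is unitary and satisfies `U * D w = D' w * U` for every `w`. Some entry
`U 1 y` is nonzero, and comparing entries at `(1, y)` gives `f' (w⁻¹) = f (y * w⁻¹)` for all `w`:
`f'` is the translate of `f` by `y⁻¹`.
-/

open Matrix BigOperators

section

variable {G : Type*} [Group G] [Fintype G]

theorem ftrans_translate {d : ℕ} (f : G → ℂ) (t : G)
    (ρ : G →* Matrix (Fin d) (Fin d) ℂ) :
    ftrans (fun x => f (t⁻¹ * x)) ρ = ρ t * ftrans f ρ := by
  unfold ftrans
  rw [Finset.mul_sum, ← Equiv.sum_comp (Equiv.mulLeft t)]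
  refine Finset.sum_congr rfl fun x _ => ?_
  simp

open Classical in
/-- The left regular representation, by permutation matrices indexed by `G`. -/
noncomputable def regRep (G : Type*) [Group G] [Fintype G] : G →* Matrix G G ℂ where
  toFun x := Matrix.of fun i j => if x * j = i then 1 else 0
  map_one' := by
    ext i j
    simp [Matrix.one_apply, eq_comm]
  map_mul' x y := by
    ext i j
    simp [Matrix.mul_apply, mul_assoc]

/-- The matrix of left convolution by `f`, i.e. the Fourier transform of `f` at the left regular
representation. -/
def convMat (f : G → ℂ) : Matrix G G ℂ := Matrix.of fun i j => f (i * j⁻¹)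

theorem sum_smul_regRep (f : G → ℂ) : ∑ x, f x • regRep G x = convMat f := by
  classical
  ext i j
  simp [Matrix.sum_apply, regRep, convMat, ← eq_mul_inv_iff_mul_eq]

open Classical in
theorem regRep_unitary (x : G) : (regRep G x)ᴴ * regRep G x = 1 := by
  ext i j
  simp [Matrix.mul_apply, regRep, Matrix.one_apply, eq_comm]

open Classical in
/-- The left regular representation with its index set `G` renumbered by `Fin (card G)`. -/
noncomputable def regRepFin (G : Type*) [Group G] [Fintype G] :
    G →* Matrix (Fin (Fintype.card G)) (Fin (Fintype.card G)) ℂ :=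
  (Matrix.reindexAlgEquiv ℂ ℂ (Fintype.equivFin G)).toMonoidHom.comp (regRep G)

theorem regRepFin_apply (x : G) :
    regRepFin G x = Matrix.reindex (Fintype.equivFin G) (Fintype.equivFin G) (regRep G x) := rfl

theorem regRepFin_unitary (x : G) : (regRepFin G x)ᴴ * regRepFin G x = 1 := by
  classical
  rw [regRepFin_apply, Matrix.conjTranspose_reindex, Matrix.reindex_apply, Matrix.reindex_apply,
    Matrix.submatrix_mul_equiv, regRep_unitary, Matrix.submatrix_one_equiv]

theorem ftrans_regRepFin (f : G → ℂ) :
    ftrans f (regRepFin G) =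
      Matrix.reindex (Fintype.equivFin G) (Fintype.equivFin G) (convMat f) := by
  ext i j
  simp [ftrans, regRepFin_apply, ← sum_smul_regRep, Matrix.sum_apply]

/-- Agreement of the skew spectra at the regular representation gives agreement of the triple
correlations. -/
theorem triple_eq (f f' : G → ℂ)
    (h : ∀ z : G,
      (ftrans (fun x => f' x * f' (x * z)) (regRepFin G))ᴴ * ftrans f' (regRepFin G) =
        (ftrans (fun x => f x * f (x * z)) (regRepFin G))ᴴ * ftrans f (regRepFin G))
    (w z g : G) :
    ∑ k, star (f' (k * w⁻¹)) * (star (f' (k * z⁻¹)) * f' (k * g⁻¹)) =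
      ∑ k, star (f (k * w⁻¹)) * (star (f (k * z⁻¹)) * f (k * g⁻¹)) := by
  have h1 := h (w * z⁻¹)
  simp only [ftrans_regRepFin] at h1
  have h2 := congrFun (congrFun h1 (Fintype.equivFin G w)) (Fintype.equivFin G g)
  rw [← (Fintype.equivFin G).symm.sum_comp, ← (Fintype.equivFin G).symm.sum_comp]
  simpa [Matrix.mul_apply, convMat, mul_assoc, mul_left_comm] using h2

theorem sum_mul_inv (f : G → ℂ) (k : G) : ∑ w, f (k * w⁻¹) = ∑ x, f x :=
  Equiv.sum_comp ((Equiv.inv G).trans (Equiv.mulLeft k)) f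

theorem sum_star_mul_inv (f a : G → ℂ) :
    ∑ w, ∑ k, star (f (k * w⁻¹)) * a k = star (∑ x, f x) * ∑ k, a k := by
  rw [Finset.sum_comm, Finset.mul_sum]
  refine Finset.sum_congr rfl fun k _ => ?_
  rw [← Finset.sum_mul, ← star_sum, sum_mul_inv]

theorem eq_of_star_mul (s t : ℂ) (hs : s ≠ 0)
    (h : star t * (star t * t) = star s * (star s * s)) : t = s := by
  have hn : ‖t‖ = ‖s‖ := by
    have h1 := congrArg norm h
    simp only [norm_mul, norm_star] at h1
    have h2 : ‖t‖ ^ 3 = ‖s‖ ^ 3 := by linarith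
    exact (pow_left_inj₀ (norm_nonneg _) (norm_nonneg _) (by norm_num)).1 h2
  have e : star t * t = star s * s := by
    have hc (u : ℂ) : star u * u = (‖u‖ : ℂ) ^ 2 := by
      rw [← Complex.conj_mul']; rfl
    rw [hc, hc, hn]
  have hss : star s * s ≠ 0 := mul_ne_zero (star_ne_zero.2 hs) hs
  rw [e] at h
  exact star_injective (mul_right_cancel₀ hss h)

open Classical in
/-- A function is determined up to left translation by its triple correlations, provided its
convolution matrix is invertible. -/
theorem exists_translate (f f' : G → ℂ) (hS : ∑ x, f x ≠ 0) (hM : IsUnit (convMat f))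
    (hT : ∀ w z g : G,
      ∑ k, star (f' (k * w⁻¹)) * (star (f' (k * z⁻¹)) * f' (k * g⁻¹)) =
        ∑ k, star (f (k * w⁻¹)) * (star (f (k * z⁻¹)) * f (k * g⁻¹))) :
    ∃ t : G, f' = fun x => f (t⁻¹ * x) := by
  have h2 (z g : G) :
      star (∑ x, f' x) * ∑ k, star (f' (k * z⁻¹)) * f' (k * g⁻¹) =
        star (∑ x, f x) * ∑ k, star (f (k * z⁻¹)) * f (k * g⁻¹) := by
    have := Finset.sum_congr rfl fun w (_ : w ∈ Finset.univ) => hT w z g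
    rwa [sum_star_mul_inv f' fun k => star (f' (k * z⁻¹)) * f' (k * g⁻¹),
      sum_star_mul_inv f fun k => star (f (k * z⁻¹)) * f (k * g⁻¹)] at this
  have hSS : ∑ x, f' x = ∑ x, f x := by
    have := Finset.sum_congr rfl fun z (_ : z ∈ Finset.univ) => h2 z 1
    rw [← Finset.mul_sum, ← Finset.mul_sum, sum_star_mul_inv f' fun k => f' (k * 1⁻¹),
      sum_star_mul_inv f fun k => f (k * 1⁻¹)] at this
    simp only [inv_one, mul_one] at this
    exact eq_of_star_mul _ _ hS this
  obtain ⟨M, hMf⟩ := hM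
  set N : Matrix G G ℂ := ↑M⁻¹ with hN
  have hMN : convMat f * N = 1 := by rw [← hMf, hN, Units.mul_inv]
  have hNM : Nᴴ * (convMat f)ᴴ = 1 := by
    rw [← Matrix.conjTranspose_mul, hMN, Matrix.conjTranspose_one]
  have hgram : (convMat f')ᴴ * convMat f' = (convMat f)ᴴ * convMat f := by
    ext z g
    have := h2 z g
    rw [hSS] at this
    simpa [Matrix.mul_apply, convMat] using mul_left_cancel₀ (star_ne_zero.2 hS) this
  have hdiag (w : G) :
      (convMat f')ᴴ * Matrix.diagonal (fun x => star (f' (x * w⁻¹))) * convMat f' =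
        (convMat f)ᴴ * Matrix.diagonal (fun x => star (f (x * w⁻¹))) * convMat f := by
    ext z g
    rw [Matrix.mul_apply, Matrix.mul_apply]
    simpa [Matrix.mul_diagonal, convMat, mul_assoc, mul_left_comm] using hT w z g
  set U := convMat f' * N with hU
  have hconj (A B : Matrix G G ℂ)
      (h : (convMat f')ᴴ * A * convMat f' = (convMat f)ᴴ * B * convMat f) :
      Uᴴ * A * U = B := by
    calc Uᴴ * A * U = Nᴴ * ((convMat f')ᴴ * A * convMat f') * N := by
          simp only [hU, Matrix.conjTranspose_mul, Matrix.mul_assoc]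
      _ = (Nᴴ * (convMat f)ᴴ) * B * (convMat f * N) := by
          rw [h]; simp only [Matrix.mul_assoc]
      _ = B := by rw [hNM, hMN, Matrix.one_mul, Matrix.mul_one]
  have hU1 : Uᴴ * U = 1 := by
    simpa using hconj 1 1 (by simpa using hgram)
  have hU2 : U * Uᴴ = 1 := mul_eq_one_comm.1 hU1
  have hcomm (w : G) : U * Matrix.diagonal (fun x => star (f (x * w⁻¹))) =
      Matrix.diagonal (fun x => star (f' (x * w⁻¹))) * U := by
    rw [← hconj _ _ (hdiag w), Matrix.mul_assoc Uᴴ, ← Matrix.mul_assoc U, hU2, Matrix.one_mul]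
  obtain ⟨y, hy⟩ : ∃ y, U 1 y ≠ 0 := by
    by_contra! hzero
    have := congrFun (congrFun hU2 1) 1
    simp [Matrix.mul_apply, hzero] at this
  refine ⟨y⁻¹, funext fun x => ?_⟩
  have := congrFun (congrFun (hcomm x⁻¹) 1) y
  rw [Matrix.mul_diagonal, Matrix.diagonal_mul, mul_comm] at this
  have := star_injective (mul_right_cancel₀ hy this)
  simpa using this.symm

end

/-- completeness of the skew spectrum, cf. Theorem 1 of the paper:
if every Fourier matrix `f̂(ρ)` at a unitary matrix representation is invertible,
then `f' = f^t` for some `t ∈ G` iff the skew spectra of `f'` and `f` agree at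
every `z ∈ G` and every unitary matrix representation `ρ`. -/
theorem skew_spectrum_complete {G : Type*} [Group G] [Fintype G]
    (f f' : G → ℂ)
    (hf : ∀ (d : ℕ) (ρ : G →* Matrix (Fin d) (Fin d) ℂ),
      (∀ x : G, (ρ x)ᴴ * ρ x = 1) → IsUnit (ftrans f ρ)) :
    (∃ t : G, f' = fun x => f (t⁻¹ * x)) ↔
      ∀ (z : G) (d : ℕ) (ρ : G →* Matrix (Fin d) (Fin d) ℂ),
        (∀ x : G, (ρ x)ᴴ * ρ x = 1) →
        (ftrans (fun x => f' x * f' (x * z)) ρ)ᴴ * ftrans f' ρ =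
          (ftrans (fun x => f x * f (x * z)) ρ)ᴴ * ftrans f ρ := by
  classical
  constructor
  · rintro ⟨t, rfl⟩ z d ρ hρ
    have h1 := ftrans_translate (fun x => f x * f (x * z)) t ρ
    simp only [mul_assoc] at h1
    rw [h1, ftrans_translate f t ρ, Matrix.conjTranspose_mul, Matrix.mul_assoc,
      ← Matrix.mul_assoc (ρ t)ᴴ, hρ, Matrix.one_mul]
  · intro h
    refine exists_translate f f' ?_ ?_
      (triple_eq f f' fun z => h z _ (regRepFin G) regRepFin_unitary)
    · intro h0
      have := hf 1 1 (by simp)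
      simp [ftrans, ← Finset.sum_smul, h0] at this
    · have := hf _ (regRepFin G) regRepFin_unitary
      rw [ftrans_regRepFin] at this
      exact (MulEquiv.isUnit_map (Matrix.reindexAlgEquiv ℂ ℂ (Fintype.equivFin G))).1 this
end

section
/- Let G be a finite group, H a subgroup of G, and f : G → ℂ a right H-invariant function, i.e., f(xh) = f(x) for all x ∈ G and h ∈ H. Then for every z ∈ G, h' ∈ H, and every unitary matrix representation ρ of G, the skew spectrum components satisfy r̂_{h'z}(ρ)ᴴ · f̂(ρ) = ρ(h') · (r̂_z(ρ)ᴴ · f̂(ρ)), where r_w(x) = f(x) f(xw). -/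
open Matrix BigOperators

/-- for right `H`-invariant `f`, unitary `ρ`, and `h' ∈ H`,
`r̂_{h'z}(ρ)ᴴ * f̂(ρ) = ρ(h') * (r̂_z(ρ)ᴴ * f̂(ρ))`, where `r_w(x) = f(x) f(xw)`. -/
theorem skew_spectrum_left_coset {G : Type*} [Group G] [Fintype G]
    (H : Subgroup G) (f : G → ℂ) (hf : ∀ x : G, ∀ h ∈ H, f (x * h) = f x)
    (z : G) (h' : G) (hh' : h' ∈ H)
    {d : ℕ} (ρ : G →* Matrix (Fin d) (Fin d) ℂ)
    (hρ : ∀ x : G, (ρ x)ᴴ * ρ x = 1) :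
    (ftrans (fun x => f x * f (x * (h' * z))) ρ)ᴴ * ftrans f ρ =
      ρ h' * ((ftrans (fun x => f x * f (x * z)) ρ)ᴴ * ftrans f ρ) := by
  -- `ρ` unitary: `ρ(h')` is the adjoint of `ρ(h'⁻¹)`.
  have hinv : (ρ h'⁻¹)ᴴ = ρ h' := by
    calc (ρ h'⁻¹)ᴴ = (ρ h'⁻¹)ᴴ * (ρ h'⁻¹ * ρ h') := by
          rw [← map_mul, inv_mul_cancel, map_one, mul_one]
      _ = ρ h' := by rw [← mul_assoc, hρ, one_mul]
  -- Substituting `x ↦ x h'⁻¹` and using `f(x h'⁻¹) = f(x)` gives `r̂_{h'z}(ρ) = r̂_z(ρ) ρ(h'⁻¹)`.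
  have key : ftrans (fun x => f x * f (x * (h' * z))) ρ =
      ftrans (fun x => f x * f (x * z)) ρ * ρ h'⁻¹ := by
    unfold ftrans
    rw [← Equiv.sum_comp (Equiv.mulRight h'⁻¹), Finset.sum_mul]
    refine Finset.sum_congr rfl fun x _ => ?_
    have e : x * h'⁻¹ * (h' * z) = x * z := by group
    simp only [Equiv.coe_mulRight, e, hf x _ (H.inv_mem hh'), map_mul, smul_mul_assoc]
  rw [key, conjTranspose_mul, hinv, mul_assoc]
end
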